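/- Let n ≥ 5, let Γ be a 3-homogeneous access structure on n players satisfying monotonicity, no-cloning and no-redundancy, and let ψ be a pure QSS state for Γ. Then the (n+1)-qubit state ψ is 3-uniform: for every subset A of its qubit positions with |A| ≤ 3, the reduction of ψ to A is maximally mixed. -/

import Mathlib

open Finset

/-- Monotonicity of an access structure on `n` players (players = `Fin n`). -/
def Monotonic {n : ℕ} (Γ : Finset (Fin n) → Prop) : Prop :=
  ∀ A B : Finset (Fin n), Γ A → A ⊆ B → Γ B

/-- No-cloning: a set is authorized iff its complement is not. -/
def NoCloning {n : ℕ} (Γ : Finset (Fin n) → Prop) : Prop :=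
  ∀ A : Finset (Fin n), Γ A ↔ ¬ Γ Aᶜ

/-- `A` is a minimal authorized set of `Γ`. -/
def IsMinimal {n : ℕ} (Γ : Finset (Fin n) → Prop) (A : Finset (Fin n)) : Prop :=
  Γ A ∧ ∀ B : Finset (Fin n), B ⊂ A → ¬ Γ B

/-- No-redundancy: every player lies in some minimal authorized set. -/
def NoRedundancy {n : ℕ} (Γ : Finset (Fin n) → Prop) : Prop :=
  ∀ i : Fin n, ∃ A : Finset (Fin n), IsMinimal Γ A ∧ i ∈ A

noncomputable section

/-- Combine an assignment on `A` and one on `Aᶜ` into a full bit string. -/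
def glue {m : ℕ} (A : Finset (Fin m)) (u : {x // x ∈ A} → Fin 2)
    (w : {x // x ∈ Aᶜ} → Fin 2) : Fin m → Fin 2 :=
  fun x => if h : x ∈ A then u ⟨x, h⟩ else w ⟨x, Finset.mem_compl.mpr h⟩

/-- Reduced density matrix of the pure state `ψ` on the qubit positions in `A`:
the partial trace over the positions outside `A` of `ψψ†`. -/
def reducedDensity {m : ℕ} (ψ : (Fin m → Fin 2) → ℂ) (A : Finset (Fin m)) :
    Matrix ({x // x ∈ A} → Fin 2) ({x // x ∈ A} → Fin 2) ℂ :=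
  fun u v => ∑ w : {x // x ∈ Aᶜ} → Fin 2,
    ψ (glue A u w) * (starRingEnd ℂ) (ψ (glue A v w))

/-- The reduction of `ψ` to `A` is maximally mixed, i.e. equals `2^{-|A|} · I`. -/
def MaximallyMixed {m : ℕ} (ψ : (Fin m → Fin 2) → ℂ) (A : Finset (Fin m)) : Prop :=
  reducedDensity ψ A =
    ((2 : ℂ) ^ A.card)⁻¹ •
      (1 : Matrix ({x // x ∈ A} → Fin 2) ({x // x ∈ A} → Fin 2) ℂ)

open Classical in
/-- Von Neumann entropy (natural logarithm): sum of `-λ log λ` over the eigenvalues. -/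
def vnEntropy {ι : Type} [Fintype ι] [DecidableEq ι] (ρ : Matrix ι ι ℂ) : ℝ :=
  if h : ρ.IsHermitian then ∑ i, Real.negMulLog (h.eigenvalues i) else 0

/-- Entropy of the reduction of `ψ` to the set `A` of qubit positions. -/
def Sent {m : ℕ} (ψ : (Fin m → Fin 2) → ℂ) (A : Finset (Fin m)) : ℝ :=
  vnEntropy (reducedDensity ψ A)

/-- The qubit positions (in `{0,1,…,n} = Fin (n+1)`, where `0` is the reference qubit)
of a set of players `A ⊆ Fin n`: player `i` holds position `i.succ`. -/
def posOf {n : ℕ} (A : Finset (Fin n)) : Finset (Fin (n + 1)) := A.image Fin.succ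

/-- `ψ` is a pure QSS state for the access structure `Γ`: a normalized pure state of
`n+1` qubits (position `0` being the reference qubit `R`) satisfying Recoverability
`S(R) + S(A) - S(R ∪ A) = 2 log 2` for authorized `A` and Secrecy
`S(R) + S(B) - S(R ∪ B) = 0` for unauthorized `B`. -/
structure IsPureQSSState {n : ℕ} (Γ : Finset (Fin n) → Prop)
    (ψ : (Fin (n + 1) → Fin 2) → ℂ) : Prop where
  normalized : ∑ x : Fin (n + 1) → Fin 2, ‖ψ x‖ ^ 2 = 1
  recover : ∀ A : Finset (Fin n), Γ A →
    Sent ψ {0} + Sent ψ (posOf A) - Sent ψ (insert 0 (posOf A)) = 2 * Real.log 2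
  secrecy : ∀ B : Finset (Fin n), ¬ Γ B →
    Sent ψ {0} + Sent ψ (posOf B) - Sent ψ (insert 0 (posOf B)) = 0

end


section QI
open scoped ComplexOrder

lemma vnEntropy_eq_roots {ι : Type} [Fintype ι] [DecidableEq ι] (ρ : Matrix ι ι ℂ)
    (h : ρ.IsHermitian) :
    vnEntropy ρ = (ρ.charpoly.roots.map (fun z => Real.negMulLog z.re)).sum := by
  rw [vnEntropy, dif_pos h, h.roots_charpoly_eq_eigenvalues, Multiset.map_map]
  exact Finset.sum_congr rfl fun i _ => by simp

lemma vnEntropy_congr {ι κ : Type} [Fintype ι] [DecidableEq ι] [Fintype κ] [DecidableEq κ]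
    (ρ : Matrix ι ι ℂ) (σ : Matrix κ κ ℂ)
    (h : ρ.IsHermitian) (h' : σ.IsHermitian) (hc : ρ.charpoly = σ.charpoly) :
    vnEntropy ρ = vnEntropy σ := by
  rw [vnEntropy_eq_roots ρ h, vnEntropy_eq_roots σ h', hc]

lemma vnEntropy_mul_comm {ι κ : Type} [Fintype ι] [DecidableEq ι] [Fintype κ] [DecidableEq κ]
    (M : Matrix ι κ ℂ) (N : Matrix κ ι ℂ) (h : (M * N).IsHermitian) (h' : (N * M).IsHermitian) :
    vnEntropy (M * N) = vnEntropy (N * M) := by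
  rw [vnEntropy_eq_roots _ h, vnEntropy_eq_roots _ h']
  have := Matrix.charpoly_mul_comm' M N
  have h2 := congrArg (fun p => (p.roots.map (fun z : ℂ => Real.negMulLog z.re)).sum) this
  rw [Polynomial.roots_mul, Polynomial.roots_mul] at h2
  · simpa [Multiset.map_nsmul, Multiset.sum_nsmul] using h2
  · exact mul_ne_zero (pow_ne_zero _ Polynomial.X_ne_zero) (Matrix.charpoly_monic _).ne_zero
  · exact mul_ne_zero (pow_ne_zero _ Polynomial.X_ne_zero) (Matrix.charpoly_monic _).ne_zero

lemma vnEntropy_diag {ι : Type} [Fintype ι] [DecidableEq ι] (Q : Matrix ι ι ℂ)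
    (hQ : Q.PosSemidef) :
    vnEntropy Q ≤ ∑ a, Real.negMulLog (Q a a).re ∧
    (vnEntropy Q = ∑ a, Real.negMulLog (Q a a).re → ∀ a b, a ≠ b → Q a b = 0) := by
  have hH := hQ.isHermitian
  set W : Matrix ι ι ℂ := (hH.eigenvectorUnitary : Matrix ι ι ℂ) with hW
  have hWW : W * star W = 1 := Unitary.coe_mul_star_self hH.eigenvectorUnitary
  have hWW' : star W * W = 1 := Unitary.coe_star_mul_self hH.eigenvectorUnitary
  set l := hH.eigenvalues with hl
  have hl0 : ∀ j, 0 ≤ l j := hQ.eigenvalues_nonneg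
  have hent : ∀ a b, Q a b = ∑ j, W a j * (l j : ℂ) * star (W b j) := by
    intro a b
    have := hH.spectral_theorem
    rw [Unitary.conjStarAlgAut_apply] at this
    have h2 := congrFun (congrFun this a) b
    rw [h2, Matrix.mul_apply]
    refine Finset.sum_congr rfl fun j _ => ?_
    rw [Matrix.mul_diagonal]
    simp [hW, hl, Matrix.star_apply]
  have hdiag : ∀ a, (Q a a).re = ∑ j, Complex.normSq (W a j) • l j := by
    intro a
    rw [hent, Complex.re_sum]
    refine Finset.sum_congr rfl fun j _ => ?_
    simp [Complex.normSq_apply]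
    ring
  have hrow : ∀ a, ∑ j, Complex.normSq (W a j) = 1 := by
    intro a
    have := congrFun (congrFun hWW a) a
    rw [Matrix.mul_apply] at this
    have h2 := congrArg Complex.re this
    simp [Matrix.star_apply] at h2
    simpa [Complex.normSq_apply] using h2
  have hcol : ∀ j, ∑ a, Complex.normSq (W a j) = 1 := by
    intro j
    have := congrFun (congrFun hWW' j) j
    rw [Matrix.mul_apply] at this
    have h2 := congrArg Complex.re this
    simp [Matrix.star_apply] at h2
    simpa [Complex.normSq_apply] using h2
  have hS : vnEntropy Q = ∑ a, ∑ j, Complex.normSq (W a j) • Real.negMulLog (l j) := by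
    rw [Finset.sum_comm, vnEntropy, dif_pos hH]
    refine Finset.sum_congr rfl fun j _ => ?_
    rw [← Finset.sum_smul, hcol, one_smul]
  have hle : ∀ a, ∑ j, Complex.normSq (W a j) • Real.negMulLog (l j)
      ≤ Real.negMulLog (Q a a).re := by
    intro a
    rw [hdiag]
    exact Real.concaveOn_negMulLog.le_map_sum (fun j _ => Complex.normSq_nonneg _) (hrow a)
      (fun j _ => hl0 j)
  refine ⟨hS ▸ Finset.sum_le_sum fun a _ => hle a, fun heq a b hab => ?_⟩
  rw [hS] at heq
  have h1 := (Finset.sum_eq_sum_iff_of_le (fun a _ => hle a)).1 heq a (Finset.mem_univ _)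
  rw [hdiag] at h1
  have h2 := (Real.strictConcaveOn_negMulLog.map_sum_eq_iff'
    (fun j _ => Complex.normSq_nonneg (W a j)) (hrow a) (fun j _ => hl0 j)).1 h1.symm
  rw [hent]
  have h3 : ∀ j, W a j * (l j : ℂ) * star (W b j)
      = ((∑ j, Complex.normSq (W a j) • l j : ℝ) : ℂ) * (W a j * star (W b j)) := by
    intro j
    by_cases hz : W a j = 0
    · simp [hz]
    · rw [← h2 j (Finset.mem_univ _) (by simpa using hz)]; ring
  simp_rw [h3]
  rw [← Finset.mul_sum]
  have := congrFun (congrFun hWW a) b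
  rw [Matrix.mul_apply] at this
  simp only [Matrix.star_apply] at this
  rw [this, Matrix.one_apply_ne hab, mul_zero]

lemma negMulLog_two (p q : ℝ) (hp : 0 ≤ p) (hq : 0 ≤ q) :
    Real.negMulLog p + Real.negMulLog q ≤ Real.negMulLog (p + q) + (p + q) * Real.log 2 ∧
    (Real.negMulLog p + Real.negMulLog q = Real.negMulLog (p + q) + (p + q) * Real.log 2 →
      p = q) := by
  have key : 2 * Real.negMulLog ((1/2) * (p+q))
      = Real.negMulLog (p + q) + (p + q) * Real.log 2 := by
    rw [Real.negMulLog_mul]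
    have : Real.negMulLog (1/2) = (1/2) * Real.log 2 := by
      simp [Real.negMulLog]
    rw [this]; ring
  rw [← key]
  have e : (1/2 : ℝ) * (p + q) = (1/2:ℝ) • p + (1/2:ℝ) • q := by simp; ring
  constructor
  · have := Real.concaveOn_negMulLog.2 hp hq (show (0:ℝ) ≤ 1/2 by norm_num)
      (show (0:ℝ) ≤ 1/2 by norm_num) (by norm_num)
    rw [e]
    simp only [smul_eq_mul] at this ⊢
    linarith
  · intro h
    by_contra hne
    have := Real.strictConcaveOn_negMulLog.2 hp hq hne (show (0:ℝ) < 1/2 by norm_num)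
      (show (0:ℝ) < 1/2 by norm_num) (by norm_num)
    rw [e] at h
    simp only [smul_eq_mul] at this h
    linarith

open Kronecker in
lemma vnEntropy_ptrace {ι : Type} [Fintype ι] [DecidableEq ι]
    (ρ : Matrix (ι × Fin 2) (ι × Fin 2) ℂ) (σ : Matrix ι ι ℂ) (hρ : ρ.PosSemidef)
    (hσ : σ.IsHermitian) (hσ1 : σ.trace = 1)
    (hp : ∀ u v, σ u v = ∑ s, ρ (u, s) (v, s)) :
    vnEntropy ρ ≤ vnEntropy σ + Real.log 2 ∧
    (vnEntropy ρ = vnEntropy σ + Real.log 2 →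
      ∀ u v s t, ρ (u, s) (v, t) = if s = t then σ u v / 2 else 0) := by
  set U : Matrix ι ι ℂ := (hσ.eigenvectorUnitary : Matrix ι ι ℂ) with hU
  have hUU : U * star U = 1 := Unitary.coe_mul_star_self hσ.eigenvectorUnitary
  have hUU' : star U * U = 1 := Unitary.coe_star_mul_self hσ.eigenvectorUnitary
  set l := hσ.eigenvalues with hl
  have hD : star U * σ * U = Matrix.diagonal (fun i => (l i : ℂ)) := by
    have := hσ.spectral_theorem
    rw [Unitary.conjStarAlgAut_apply] at this
    rw [this]
    change star U * (U * _ * star U) * U = _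
    rw [show star U * (U * Matrix.diagonal (RCLike.ofReal ∘ l) * star U) * U
      = (star U * U) * Matrix.diagonal (RCLike.ofReal ∘ l) * (star U * U) by
        simp only [mul_assoc]]
    rw [hUU', one_mul, mul_one]; rfl
  set V : Matrix (ι × Fin 2) (ι × Fin 2) ℂ := U ⊗ₖ (1 : Matrix (Fin 2) (Fin 2) ℂ) with hV
  have hVs : star V = star U ⊗ₖ (1 : Matrix (Fin 2) (Fin 2) ℂ) := by
    simp [hV, Matrix.star_eq_conjTranspose, Matrix.conjTranspose_kronecker]
  have hVV : V * star V = 1 := by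
    rw [hVs, hV, ← Matrix.mul_kronecker_mul, hUU]; simp
  have hVV' : star V * V = 1 := by
    rw [hVs, hV, ← Matrix.mul_kronecker_mul, hUU']; simp
  set Q := star V * ρ * V with hQdef
  have hQ : Q.PosSemidef := by
    have := hρ.conjTranspose_mul_mul_same V
    simpa [hQdef, Matrix.star_eq_conjTranspose] using this
  have hρQ : ρ = V * Q * star V := by
    rw [hQdef, show V * (star V * ρ * V) * star V = (V * star V) * ρ * (V * star V) by
      simp only [mul_assoc], hVV, one_mul, mul_one]
  have hS : vnEntropy ρ = vnEntropy Q := by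
    apply vnEntropy_congr _ _ hρ.isHermitian hQ.isHermitian
    rw [hQdef, mul_assoc, Matrix.charpoly_mul_comm, mul_assoc, hVV, mul_one]
  have hQe : ∀ a b s t, Q (a, s) (b, t) = ∑ v, ∑ u, star (U u a) * ρ (u, s) (v, t) * U v b := by
    intro a b s t
    rw [hQdef, Matrix.mul_apply, Fintype.sum_prod_type]
    refine Finset.sum_congr rfl fun v _ => ?_
    rw [Finset.sum_eq_single t]
    · rw [Matrix.mul_apply, Fintype.sum_prod_type, Finset.sum_mul]
      refine Finset.sum_congr rfl fun u _ => ?_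
      rw [Finset.sum_eq_single s]
      · rw [hVs]; simp [hV, Matrix.kroneckerMap_apply, Matrix.star_apply]
      · intro r _ hr; rw [hVs]; simp [Matrix.kroneckerMap_apply, Matrix.one_apply_ne hr.symm]
      · simp
    · intro r _ hr; simp [hV, Matrix.kroneckerMap_apply, Matrix.one_apply_ne hr]
    · simp
  have hQsum : ∀ a, Q (a, 0) (a, 0) + Q (a, 1) (a, 1) = l a := by
    intro a
    have h1 := congrFun (congrFun hD a) a
    rw [Matrix.diagonal_apply_eq] at h1
    rw [← h1, hQe, hQe, Matrix.mul_apply, ← Finset.sum_add_distrib]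
    refine Finset.sum_congr rfl fun v _ => ?_
    rw [Matrix.mul_apply, Finset.sum_mul, ← Finset.sum_add_distrib]
    refine Finset.sum_congr rfl fun u _ => ?_
    rw [hp, Fin.sum_univ_two, Matrix.star_apply]; ring
  have hQre : ∀ a, (Q (a, 0) (a, 0)).re + (Q (a, 1) (a, 1)).re = l a := by
    intro a
    have := congrArg Complex.re (hQsum a)
    simpa using this
  have hQ0 : ∀ a, 0 ≤ (Q a a).re := fun a => (Complex.le_def.1 hQ.diag_nonneg).1
  have hQim : ∀ a, Q a a = ((Q a a).re : ℂ) := by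
    intro a
    have := (Complex.le_def.1 (hQ.diag_nonneg (i := a))).2
    apply Complex.ext <;> simp at this ⊢
    exact this.symm
  have hlsum : ∑ a, l a = 1 := by
    have := hσ.trace_eq_sum_eigenvalues
    rw [hσ1] at this
    have h2 : ((∑ a, l a : ℝ) : ℂ) = 1 := by rw [this]; simp [hl]
    exact_mod_cast h2
  have hσS : vnEntropy σ + Real.log 2 = ∑ a, (Real.negMulLog (l a) + l a * Real.log 2) := by
    rw [Finset.sum_add_distrib, ← Finset.sum_mul, hlsum, one_mul, vnEntropy, dif_pos hσ]
  obtain ⟨d1, d2⟩ := vnEntropy_diag Q hQ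
  have hle : ∀ a, Real.negMulLog (Q (a, 0) (a, 0)).re + Real.negMulLog (Q (a, 1) (a, 1)).re
      ≤ Real.negMulLog (l a) + l a * Real.log 2 := by
    intro a
    rw [← hQre]
    exact (negMulLog_two _ _ (hQ0 _) (hQ0 _)).1
  have hsum : ∑ a, Real.negMulLog (Q a a).re = ∑ a, (Real.negMulLog (Q (a, 0) (a, 0)).re
      + Real.negMulLog (Q (a, 1) (a, 1)).re) := by
    rw [Fintype.sum_prod_type]; simp [Fin.sum_univ_two]
  rw [hS, hσS]
  rw [hsum] at d1 d2
  refine ⟨d1.trans (Finset.sum_le_sum fun a _ => hle a), fun heq => ?_⟩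
  have heq1 : vnEntropy Q = _ := le_antisymm d1 (heq ▸ Finset.sum_le_sum fun a _ => hle a)
  have hoff := d2 heq1
  have heq2 := (Finset.sum_eq_sum_iff_of_le (fun a _ => hle a)).1 (heq1.symm.trans heq)
  have hh : ∀ a, (Q (a, 0) (a, 0)).re = (Q (a, 1) (a, 1)).re := by
    intro a
    have := heq2 a (Finset.mem_univ _)
    rw [← hQre] at this
    exact (negMulLog_two _ _ (hQ0 _) (hQ0 _)).2 this
  have hQd : Q = (star U * σ * U) ⊗ₖ ((1/2 : ℂ) • (1 : Matrix (Fin 2) (Fin 2) ℂ)) := by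
    rw [hD]
    ext ⟨a, s⟩ ⟨b, t⟩
    by_cases h : (a, s) = (b, t)
    · obtain ⟨rfl, rfl⟩ := Prod.mk.inj h
      have h1 := hQre a
      have h2 := hh a
      rw [hQim]
      have h3 : (Q (a, s) (a, s)).re = l a / 2 := by
        fin_cases s <;> simp <;> linarith
      rw [h3]
      simp [Matrix.kroneckerMap_apply]
      ring
    · rw [hoff _ _ h]
      simp only [Matrix.kroneckerMap_apply, Matrix.smul_apply, Matrix.diagonal_apply,
        Matrix.one_apply]
      by_cases h1 : a = b
      · have : s ≠ t := fun h2 => h (by rw [h1, h2])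
        simp [this]
      · simp [h1]
  have hfin : ρ = σ ⊗ₖ ((1/2 : ℂ) • (1 : Matrix (Fin 2) (Fin 2) ℂ)) := by
    rw [hρQ, hQd, hVs, hV, ← Matrix.mul_kronecker_mul, ← Matrix.mul_kronecker_mul]
    rw [show U * (star U * σ * U) * star U = (U * star U) * σ * (U * star U) by
      simp only [mul_assoc], hUU, one_mul, mul_one, one_mul, mul_one]
  intro u v s t
  rw [hfin]
  simp only [Matrix.kroneckerMap_apply, Matrix.smul_apply, Matrix.one_apply]
  split_ifs <;> simp
  ring

/-- Reduced density matrix entries read off full strings. -/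
def Rf {m : ℕ} (ψ : (Fin m → Fin 2) → ℂ) (A : Finset (Fin m)) (x y : Fin m → Fin 2) : ℂ :=
  reducedDensity ψ A (fun i => x i) (fun i => y i)

lemma exists_restrict {m : ℕ} (A : Finset (Fin m)) (u : {x // x ∈ A} → Fin 2) :
    ∃ x : Fin m → Fin 2, (fun i : {x // x ∈ A} => x i) = u :=
  ⟨fun i => if h : i ∈ A then u ⟨i, h⟩ else 0, by funext i; simp⟩

lemma Rf_congr {m : ℕ} (ψ : (Fin m → Fin 2) → ℂ) (A : Finset (Fin m)) {x y x' y' : Fin m → Fin 2}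
    (hx : ∀ i ∈ A, x i = x' i) (hy : ∀ i ∈ A, y i = y' i) : Rf ψ A x y = Rf ψ A x' y' := by
  unfold Rf
  congr 1
  · funext i; exact hx i i.2
  · funext i; exact hy i i.2

lemma Rf_eq {m : ℕ} (ψ : (Fin m → Fin 2) → ℂ) (A : Finset (Fin m)) (x y : Fin m → Fin 2) :
    Rf ψ A x y = ∑ z : Fin m → Fin 2, if (∀ i ∈ A, z i = x i) then
      ψ z * (starRingEnd ℂ) (ψ (A.piecewise y z)) else 0 := by
  rw [← Finset.sum_filter]
  unfold Rf reducedDensity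
  refine Finset.sum_bij (fun w _ => glue A (fun i => x i) w) ?_ ?_ ?_ ?_
  · intro w _
    simp only [Finset.mem_filter, Finset.mem_univ, true_and]
    intro i hi
    simp [glue, hi]
  · intro w _ w' _ h
    funext i
    have := congrFun h i
    have hi : (i : Fin m) ∉ A := Finset.mem_compl.1 i.2
    simpa [glue, hi] using this
  · intro z hz
    simp only [Finset.mem_filter, Finset.mem_univ, true_and] at hz
    refine ⟨fun i => z i, Finset.mem_univ _, ?_⟩
    funext i
    by_cases hi : i ∈ A
    · simp [glue, hi, hz i hi]
    · simp [glue, hi]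
  · intro w _
    congr 3
    funext i
    by_cases hi : i ∈ A <;> simp [glue, hi]

lemma Rf_trace {m : ℕ} (ψ : (Fin m → Fin 2) → ℂ) (A : Finset (Fin m)) (j : Fin m) (hj : j ∉ A)
    (x y : Fin m → Fin 2) :
    Rf ψ A x y = ∑ r : Fin 2, Rf ψ (insert j A) (Function.update x j r) (Function.update y j r) := by
  simp_rw [Rf_eq]
  rw [Finset.sum_comm]
  refine Finset.sum_congr rfl fun z _ => ?_
  rw [Finset.sum_eq_single (z j)]
  · have h1 : (∀ i ∈ insert j A, z i = Function.update x j (z j) i) ↔ ∀ i ∈ A, z i = x i := by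
      constructor
      · intro h i hi
        have := h i (Finset.mem_insert_of_mem hi)
        rwa [Function.update_of_ne (by rintro rfl; exact hj hi)] at this
      · intro h i hi
        by_cases e : i = j
        · subst e; simp
        · rw [Function.update_of_ne e]
          exact h i (by simpa [e] using hi)
    have h2 : A.piecewise y z = (insert j A).piecewise (Function.update y j (z j)) z := by
      funext i
      by_cases e : i = j
      · subst e; simp [hj]
      · simp [Finset.piecewise, e]
    simp only [h1, h2]
  · intro r _ hr
    rw [if_neg]
    intro h
    have := h j (Finset.mem_insert_self _ _)
    simp at this
    exact hr this.symm
  · simp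

lemma mm_iff {m : ℕ} (ψ : (Fin m → Fin 2) → ℂ) (A : Finset (Fin m)) :
    MaximallyMixed ψ A ↔ ∀ x y, Rf ψ A x y =
      if (∀ i ∈ A, x i = y i) then ((2 : ℂ) ^ A.card)⁻¹ else 0 := by
  have key : ∀ x y : Fin m → Fin 2, (((2 : ℂ) ^ A.card)⁻¹ •
      (1 : Matrix ({x // x ∈ A} → Fin 2) ({x // x ∈ A} → Fin 2) ℂ))
        (fun i => x i) (fun i => y i) =
      if (∀ i ∈ A, x i = y i) then ((2 : ℂ) ^ A.card)⁻¹ else 0 := by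
    intro x y
    rw [Matrix.smul_apply, Matrix.one_apply]
    have : ((fun i : {x // x ∈ A} => x i) = fun i : {x // x ∈ A} => y i) ↔ ∀ i ∈ A, x i = y i := by
      rw [funext_iff]; simp
    simp only [this]
    split_ifs <;> simp
  unfold MaximallyMixed
  constructor
  · intro h x y
    rw [Rf, h, key]
  · intro h
    ext u v
    obtain ⟨x, rfl⟩ := exists_restrict A u
    obtain ⟨y, rfl⟩ := exists_restrict A v
    rw [key, ← h]; rfl

/-- Qubit `k` is maximally mixed and uncorrelated with `B`. -/
def Pr {m : ℕ} (ψ : (Fin m → Fin 2) → ℂ) (B : Finset (Fin m)) (k : Fin m) : Prop :=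
  ∀ x y, Rf ψ (insert k B) x y = if x k = y k then Rf ψ B x y / 2 else 0

lemma Pr_erase {m : ℕ} (ψ : (Fin m → Fin 2) → ℂ) (B : Finset (Fin m)) (j k : Fin m)
    (hj : j ∉ B) (hjk : j ≠ k) (h : Pr ψ (insert j B) k) : Pr ψ B k := by
  intro x y
  rw [Rf_trace ψ (insert k B) j (by simp [hj, hjk]), Rf_trace ψ B j hj]
  rw [Finset.insert_comm]
  simp_rw [h _ _, Function.update_of_ne hjk.symm]
  split_ifs
  · rw [Finset.sum_div]
  · simp

lemma Pr_subset {m : ℕ} (ψ : (Fin m → Fin 2) → ℂ) (C B : Finset (Fin m)) (k : Fin m)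
    (hk : k ∉ B) (hC : C ⊆ B) (h : Pr ψ B k) : Pr ψ C k := by
  obtain ⟨D, hD⟩ : ∃ D, D = B \ C := ⟨_, rfl⟩
  induction D using Finset.induction_on generalizing B with
  | empty =>
    have : B = C := (Finset.sdiff_eq_empty_iff_subset.1 hD.symm).antisymm hC
    rwa [← this]
  | insert j D hj ih =>
    have hjm : j ∈ B \ C := hD ▸ Finset.mem_insert_self j D
    obtain ⟨hjB, hjC⟩ := Finset.mem_sdiff.1 hjm
    refine ih (B.erase j) (fun h => hk (Finset.mem_of_mem_erase h)) ?_ ?_ ?_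
    · intro i hi
      exact Finset.mem_erase.2 ⟨fun e => hjC (e ▸ hi), hC hi⟩
    · apply Pr_erase ψ _ j k (Finset.notMem_erase _ _) (fun e => hk (e ▸ hjB))
      rwa [Finset.insert_erase hjB]
    · rw [Finset.erase_sdiff_comm, ← hD, Finset.erase_insert hj]

lemma mm_insert {m : ℕ} (ψ : (Fin m → Fin 2) → ℂ) (B : Finset (Fin m)) (k : Fin m)
    (hk : k ∉ B) (h : Pr ψ B k) (hB : MaximallyMixed ψ B) : MaximallyMixed ψ (insert k B) := by
  rw [mm_iff] at *
  intro x y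
  rw [h, hB, Finset.card_insert_of_notMem hk]
  simp only [Finset.forall_mem_insert]
  by_cases h1 : x k = y k
  · by_cases h2 : ∀ i ∈ B, x i = y i
    · rw [if_pos h1, if_pos h2, if_pos ⟨h1, h2⟩, pow_succ, mul_inv, div_eq_mul_inv]
    · rw [if_pos h1, if_neg h2, if_neg (fun h => h2 h.2), zero_div]
  · rw [if_neg h1, if_neg (fun h => h1 h.1)]

lemma rd_eq_mul {m : ℕ} (ψ : (Fin m → Fin 2) → ℂ) (A : Finset (Fin m)) :
    reducedDensity ψ A = (Matrix.of fun u w => ψ (glue A u w)) *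
      (Matrix.of fun u w => ψ (glue A u w)).conjTranspose := by
  ext u v
  simp [reducedDensity, Matrix.mul_apply]

lemma rd_psd {m : ℕ} (ψ : (Fin m → Fin 2) → ℂ) (A : Finset (Fin m)) :
    (reducedDensity ψ A).PosSemidef := by
  rw [rd_eq_mul]; exact Matrix.posSemidef_self_mul_conjTranspose _

lemma rd_reindex {m : ℕ} (A : Finset (Fin m)) (k : Fin m) (hk : k ∉ A) :
    ∃ e : ({x // x ∈ insert k A} → Fin 2) ≃ ({x // x ∈ A} → Fin 2) × Fin 2,
      ∀ x : Fin m → Fin 2, e (fun i => x i) = (fun i : {x // x ∈ A} => x i, x k) := by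
  refine ⟨Equiv.ofBijective (fun f => (fun i => f ⟨i, Finset.mem_insert_of_mem i.2⟩,
    f ⟨k, Finset.mem_insert_self _ _⟩)) ⟨?_, ?_⟩, fun x => rfl⟩
  · intro f g h
    obtain ⟨h1, h2⟩ := Prod.mk.inj h
    funext ⟨i, hi⟩
    rcases Finset.mem_insert.1 hi with rfl | hi'
    · exact h2
    · exact congrFun h1 ⟨i, hi'⟩
  · rintro ⟨u, s⟩
    obtain ⟨x, rfl⟩ := exists_restrict A u
    refine ⟨fun i => Function.update x k s i, ?_⟩
    refine Prod.ext ?_ ?_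
    · funext i
      have : (i : Fin m) ≠ k := fun e => hk (e ▸ i.2)
      simp [Function.update_of_ne this]
    · simp

lemma rd_sub {m : ℕ} (ψ : (Fin m → Fin 2) → ℂ) (A : Finset (Fin m)) (k : Fin m) (hk : k ∉ A)
    (e : ({x // x ∈ insert k A} → Fin 2) ≃ ({x // x ∈ A} → Fin 2) × Fin 2)
    (he : ∀ x : Fin m → Fin 2, e (fun i => x i) = (fun i : {x // x ∈ A} => x i, x k))
    (x y : Fin m → Fin 2) (s t : Fin 2) :
    (reducedDensity ψ (insert k A)).submatrix e.symm e.symm (fun i => x i, s) (fun i => y i, t)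
      = Rf ψ (insert k A) (Function.update x k s) (Function.update y k t) := by
  have h : ∀ (x : Fin m → Fin 2) (s : Fin 2), e.symm (fun i => x i, s) =
      fun i : {x // x ∈ insert k A} => Function.update x k s i := by
    intro x s
    rw [Equiv.symm_apply_eq, he]
    refine Prod.ext ?_ ?_
    · funext i
      have : (i : Fin m) ≠ k := fun e => hk (e ▸ i.2)
      simp [Function.update_of_ne this]
    · simp
  rw [Matrix.submatrix_apply, h, h]; rfl

lemma rd_ptrace {m : ℕ} (ψ : (Fin m → Fin 2) → ℂ) (A : Finset (Fin m)) (k : Fin m) (hk : k ∉ A)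
    (e : ({x // x ∈ insert k A} → Fin 2) ≃ ({x // x ∈ A} → Fin 2) × Fin 2)
    (he : ∀ x : Fin m → Fin 2, e (fun i => x i) = (fun i : {x // x ∈ A} => x i, x k)) (u v) :
    reducedDensity ψ A u v = ∑ s,
      (reducedDensity ψ (insert k A)).submatrix e.symm e.symm (u, s) (v, s) := by
  obtain ⟨x, rfl⟩ := exists_restrict A u
  obtain ⟨y, rfl⟩ := exists_restrict A v
  simp_rw [rd_sub ψ A k hk e he]
  exact Rf_trace ψ A k hk x y

lemma rd_trace {m : ℕ} (ψ : (Fin m → Fin 2) → ℂ) (hψ : ∑ x, ‖ψ x‖ ^ 2 = 1)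
    (A : Finset (Fin m)) : (reducedDensity ψ A).trace = 1 := by
  induction A using Finset.induction_on with
  | empty =>
    have h := Rf_eq ψ ∅ (fun _ => 0) (fun _ => 0)
    simp only [Finset.notMem_empty, false_implies, implies_true, if_true,
      Finset.piecewise_empty] at h
    have h2 : (∑ z, ψ z * (starRingEnd ℂ) (ψ z)) = 1 := by
      have := congrArg (fun r : ℝ => (r : ℂ)) hψ
      push_cast at this
      rw [← this]
      exact Finset.sum_congr rfl fun z _ => Complex.mul_conj' _
    rw [h2] at h
    rw [Matrix.trace, Fintype.sum_unique]
    rw [← h, Matrix.diag_apply, Rf]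
    congr 1 <;> exact Subsingleton.elim _ _
  | insert k A hk ih =>
    obtain ⟨e, he⟩ := rd_reindex A k hk
    rw [← ih, Matrix.trace, Matrix.trace]
    simp only [Matrix.diag_apply]
    simp_rw [rd_ptrace ψ A k hk e he, Matrix.submatrix_apply]
    rw [← Fintype.sum_prod_type' (f := fun u s => reducedDensity ψ (insert k A) (e.symm (u, s)) (e.symm (u, s)))]
    exact (Equiv.sum_comp e.symm (fun z => reducedDensity ψ (insert k A) z z)).symm

lemma Sent_insert {m : ℕ} (ψ : (Fin m → Fin 2) → ℂ) (hψ : ∑ x, ‖ψ x‖ ^ 2 = 1)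
    (A : Finset (Fin m)) (k : Fin m) (hk : k ∉ A) :
    Sent ψ (insert k A) ≤ Sent ψ A + Real.log 2 ∧
    (Sent ψ (insert k A) = Sent ψ A + Real.log 2 → Pr ψ A k) := by
  obtain ⟨e, he⟩ := rd_reindex A k hk
  have hS : Sent ψ (insert k A) =
      vnEntropy ((reducedDensity ψ (insert k A)).submatrix e.symm e.symm) := by
    apply vnEntropy_congr _ _ (rd_psd _ _).isHermitian ((rd_psd _ _).submatrix _).isHermitian
    exact (Matrix.charpoly_reindex e _).symm
  obtain ⟨h1, h2⟩ := vnEntropy_ptrace _ (reducedDensity ψ A) ((rd_psd ψ (insert k A)).submatrix e.symm)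
    (rd_psd _ _).isHermitian (rd_trace ψ hψ A) (rd_ptrace ψ A k hk e he)
  rw [hS]
  refine ⟨h1, fun h x y => ?_⟩
  have := h2 h (fun i => x i) (fun i => y i) (x k) (y k)
  rw [rd_sub ψ A k hk e he] at this
  simpa [Rf] using this

lemma Sent_compl {m : ℕ} (ψ : (Fin m → Fin 2) → ℂ) (A : Finset (Fin m)) :
    Sent ψ Aᶜ = Sent ψ A := by
  set M : Matrix ({x // x ∈ A} → Fin 2) ({x // x ∈ Aᶜ} → Fin 2) ℂ :=
    Matrix.of fun u w => ψ (glue A u w) with hM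
  have h1 : reducedDensity ψ A = M * M.conjTranspose := rd_eq_mul ψ A
  have h2 : reducedDensity ψ Aᶜ = (M.conjTranspose * M).transpose := by
    ext u v
    rw [Matrix.transpose_apply, Matrix.mul_apply, reducedDensity]
    refine Finset.sum_bij (fun w _ => fun i : {x // x ∈ A} => w ⟨i, by simp⟩) ?_ ?_ ?_ ?_
    · simp
    · intro w _ w' _ h
      funext ⟨i, hi⟩
      exact congrFun h ⟨i, by simpa using hi⟩
    · intro u _
      exact ⟨fun i => u ⟨i, by simpa using i.2⟩, Finset.mem_univ _, rfl⟩
    · intro w _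
      have hg : ∀ u, glue Aᶜ u w = glue A (fun i => w ⟨i, by simp⟩) u := by
        intro u; funext i
        by_cases hi : i ∈ A <;> simp [glue, hi]
      rw [hg, hg, hM]
      simp [mul_comm]
  have hH : (M.conjTranspose * M).IsHermitian := Matrix.isHermitian_conjTranspose_mul_self M
  unfold Sent
  rw [h2, h1, vnEntropy_mul_comm M M.conjTranspose (Matrix.isHermitian_mul_conjTranspose_self M) hH]
  exact vnEntropy_congr _ _ hH.transpose hH (Matrix.charpoly_transpose _)

lemma Sent_mm {m : ℕ} (ψ : (Fin m → Fin 2) → ℂ) (A : Finset (Fin m)) (h : MaximallyMixed ψ A) :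
    Sent ψ A = A.card * Real.log 2 := by
  unfold Sent
  rw [vnEntropy_eq_roots _ (rd_psd _ _).isHermitian, h, Matrix.smul_one_eq_diagonal,
    Matrix.charpoly_diagonal, Polynomial.roots_prod]
  · have hre : (((2 : ℂ) ^ A.card)⁻¹).re = ((2 : ℝ) ^ A.card)⁻¹ := by
      have : ((2 : ℂ) ^ A.card)⁻¹ = ((((2 : ℝ) ^ A.card)⁻¹ : ℝ) : ℂ) := by push_cast; rfl
      rw [this, Complex.ofReal_re]
    simp only [Polynomial.roots_X_sub_C, Multiset.bind_singleton, Multiset.map_map,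
      Function.comp_def, Multiset.map_const', Multiset.map_replicate, hre, Multiset.sum_replicate, Finset.card_val,
      Finset.card_univ, Fintype.card_fun, Fintype.card_fin, Fintype.card_coe, Real.negMulLog,
      Real.log_inv, Real.log_pow, nsmul_eq_mul]
    push_cast
    field_simp
  · simp [Polynomial.X_sub_C_ne_zero]

lemma mm_empty {m : ℕ} (ψ : (Fin m → Fin 2) → ℂ) (hψ : ∑ x, ‖ψ x‖ ^ 2 = 1) :
    MaximallyMixed ψ ∅ := by
  have := rd_trace ψ hψ ∅
  rw [Matrix.trace, Fintype.sum_unique] at this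
  ext u v
  rw [Subsingleton.elim v u, Matrix.smul_apply, Matrix.one_apply_eq]
  simp only [Finset.card_empty, pow_zero, inv_one, one_smul]
  rw [← this, Matrix.diag_apply]
  congr 1 <;> exact Subsingleton.elim _ _

lemma Sent_remove {m : ℕ} (ψ : (Fin m → Fin 2) → ℂ) (hψ : ∑ x, ‖ψ x‖ ^ 2 = 1)
    (A : Finset (Fin m)) (k : Fin m) (hk : k ∉ A) :
    Sent ψ A ≤ Sent ψ (insert k A) + Real.log 2 := by
  have h := (Sent_insert ψ hψ (insert k A)ᶜ k (by simp)).1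
  rw [Sent_compl, show insert k (insert k A)ᶜ = Aᶜ by
    ext i; by_cases e : i = k
    · subst e; simp [hk]
    · simp [e], Sent_compl] at h
  exact h

lemma Sent_le {m : ℕ} (ψ : (Fin m → Fin 2) → ℂ) (hψ : ∑ x, ‖ψ x‖ ^ 2 = 1)
    (A : Finset (Fin m)) : Sent ψ A ≤ A.card * Real.log 2 := by
  induction A using Finset.induction_on with
  | empty => exact (Sent_mm ψ ∅ (mm_empty ψ hψ)).le
  | insert k A hk ih =>
    rw [Finset.card_insert_of_notMem hk]; push_cast
    linarith [(Sent_insert ψ hψ A k hk).1]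

end QI

section Comb
variable {n : ℕ} (Γ : Finset (Fin n) → Prop)

/-- Some `k ∈ T` is pivotal for an unauthorized set containing the rest of `T`. -/
def Ess (T : Finset (Fin n)) : Prop :=
  ∃ k ∈ T, ∃ B : Finset (Fin n), T.erase k ⊆ B ∧ k ∉ B ∧ ¬ Γ B ∧ Γ (insert k B)

variable {Γ}

lemma exists_minimal_sub (A : Finset (Fin n)) (h : Γ A) : ∃ M, IsMinimal Γ M ∧ M ⊆ A := by
  induction A using Finset.strongInduction with
  | H A ih =>
    by_cases hm : IsMinimal Γ A
    · exact ⟨A, hm, Finset.Subset.refl _⟩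
    · have : ∃ B, B ⊂ A ∧ Γ B := by
        by_contra hc
        push Not at hc
        exact hm ⟨h, hc⟩
      obtain ⟨B, hB, hΓ⟩ := this
      obtain ⟨M, hM, hMB⟩ := ih B hB hΓ
      exact ⟨M, hM, hMB.trans hB.subset⟩

lemma small_unauth (hhom : ∀ A : Finset (Fin n), IsMinimal Γ A → A.card = 3)
    (A : Finset (Fin n)) (hA : A.card ≤ 2) : ¬ Γ A := by
  intro h
  obtain ⟨M, hM, hMA⟩ := exists_minimal_sub A h
  have := Finset.card_le_card hMA
  have := hhom M hM
  omega

lemma auth_meet (hmono : Monotonic Γ) (hnc : NoCloning Γ) {A B : Finset (Fin n)}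
    (hA : Γ A) (hB : Γ B) : ∃ i, i ∈ A ∧ i ∈ B := by
  by_contra hc
  push Not at hc
  refine (hnc A).1 hA (hmono B _ hB ?_)
  intro i hi
  simp only [Finset.mem_compl]
  exact fun h => hc i h hi

lemma crit (hmono : Monotonic Γ) (hnc : NoCloning Γ) {M : Finset (Fin n)} (hM : IsMinimal Γ M)
    {d : Fin n} (hd : d ∈ M) : ∃ N, IsMinimal Γ N ∧ d ∈ N ∧ ∀ i ∈ N, i ∈ M → i = d := by
  have h1 : Γ (M.erase d)ᶜ := by
    by_contra h
    exact hM.2 _ (Finset.erase_ssubset hd) ((hnc _).2 h)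
  obtain ⟨N, hN, hs⟩ := exists_minimal_sub _ h1
  have h2 : ∀ i ∈ N, i ∈ M → i = d := by
    intro i hi hiM
    have := hs hi
    simp only [Finset.mem_compl, Finset.mem_erase, not_and] at this
    by_contra hne
    exact this hne hiM
  obtain ⟨i, hi, hi'⟩ := auth_meet hmono hnc hN.1 hM.1
  exact ⟨N, hN, h2 i hi hi' ▸ hi, h2⟩

lemma Ess_of_minimal {M T : Finset (Fin n)} (hM : IsMinimal Γ M) {k : Fin n} (hk : k ∈ T)
    (hTM : T ⊆ M) : Ess Γ T := by
  refine ⟨k, hk, M.erase k, Finset.erase_subset_erase _ hTM, Finset.notMem_erase _ _,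
    hM.2 _ (Finset.erase_ssubset (hTM hk)), ?_⟩
  rw [Finset.insert_erase (hTM hk)]; exact hM.1

lemma Ess_single (hnr : NoRedundancy Γ) (k : Fin n) : Ess Γ {k} := by
  obtain ⟨M, hM, hk⟩ := hnr k
  exact Ess_of_minimal hM (Finset.mem_singleton_self k) (by simpa using hk)

lemma Ess_pair (hmono : Monotonic Γ) (hnc : NoCloning Γ) (hnr : NoRedundancy Γ)
    (j k : Fin n) (hjk : j ≠ k) : Ess Γ {j, k} := by
  by_contra hE
  have hpair : ∀ M, IsMinimal Γ M → k ∈ M → j ∉ M := by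
    intro M hM hk hj
    exact hE (Ess_of_minimal hM (k := k) (by simp) (by intro i; simp; rintro (rfl | rfl) <;> assumption))
  obtain ⟨M, hM, hk⟩ := hnr k
  obtain ⟨N, hN, hkN, hMN⟩ := crit hmono hnc hM hk
  have hjM := hpair M hM hk
  have hjN := hpair N hN hkN
  by_cases hG : Γ (insert j (M.erase k))
  · obtain ⟨i, hi, hi'⟩ := auth_meet hmono hnc hG hN.1
    grind
  · refine hE ⟨k, by simp, insert j (M.erase k), by grind, by grind, hG, ?_⟩
    exact hmono M _ hM.1 (by grind)

lemma set1 {T M : Finset (Fin n)} {k : Fin n} (h : ∀ i ∈ M, i ∈ T → i = k) : T.erase k ⊆ Mᶜ := by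
  intro i hi
  rw [Finset.mem_erase] at hi
  rw [Finset.mem_compl]
  exact fun hM => hi.1 (h i hM hi.2)

lemma set2 (M : Finset (Fin n)) (k : Fin n) : insert k Mᶜ = (M.erase k)ᶜ := by
  ext i
  simp only [Finset.mem_insert, Finset.mem_compl, Finset.mem_erase]
  tauto

lemma set3 {T N : Finset (Fin n)} {r b : Fin n} (c : Fin n) (h : ∀ i ∈ T, i ∉ N → i = r)
    (hb : b ∉ T) : T.erase r ⊆ insert c (N.erase b) := by
  intro i hi
  rw [Finset.mem_erase] at hi
  rw [Finset.mem_insert, Finset.mem_erase]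
  refine Or.inr ⟨fun e => hb (e ▸ hi.2), ?_⟩
  by_contra hN
  exact hi.1 (h i hi.2 hN)

lemma set4 {T N : Finset (Fin n)} {r c : Fin n} (b : Fin n) (hr : r ∈ T) (hrN : r ∉ N)
    (hc : c ∉ T) : r ∉ insert c (N.erase b) := by
  rw [Finset.mem_insert, Finset.mem_erase]
  rintro (e | e)
  · exact hc (e ▸ hr)
  · exact hrN e.2

lemma set5 {N : Finset (Fin n)} {b c : Fin n} (hb : b ∈ N) (hc : c ∉ N) :
    insert b (Nᶜ.erase c) = (insert c (N.erase b))ᶜ := by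
  ext i
  simp only [Finset.mem_insert, Finset.mem_compl, Finset.mem_erase]
  by_cases e : i = b
  · subst e
    have : i ≠ c := fun e => hc (e ▸ hb)
    simp [this]
  · by_cases e' : i = c
    · subst e'; simp [e]
    · simp [e, e']

lemma set6 {D N : Finset (Fin n)} {b : Fin n} (c : Fin n) (h : ∀ i ∈ N, i ∈ D → i = b) :
    D ⊆ insert c (insert b (Nᶜ.erase c)) := by
  intro i hi
  simp only [Finset.mem_insert, Finset.mem_compl, Finset.mem_erase]
  have := h i
  tauto

lemma Ess_triple (hmono : Monotonic Γ) (hnc : NoCloning Γ) (hnr : NoRedundancy Γ)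
    (hhom : ∀ A : Finset (Fin n), IsMinimal Γ A → A.card = 3)
    (T : Finset (Fin n)) (hT : T.card = 3) :
    Ess Γ T ∨ ∃ U : Finset (Fin n), U.card = 3 ∧ Uᶜ.card = 3 ∧ ¬ Γ U ∧ Ess Γ U := by
  by_contra hcon
  push Not at hcon
  obtain ⟨hE, hU⟩ := hcon
  have hne : ∀ k ∈ T, ∀ B : Finset (Fin n), T.erase k ⊆ B → k ∉ B → Γ (insert k B) → Γ B := by
    intro k hk B h1 h2 h3
    by_contra h4
    exact hE ⟨k, hk, B, h1, h2, h4, h3⟩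
  obtain ⟨k, hk⟩ : T.Nonempty := Finset.card_pos.1 (by omega)
  have hTu : ¬ Γ T := by
    intro h
    refine hE ⟨k, hk, T.erase k, Finset.Subset.refl _, Finset.notMem_erase _ _, ?_, ?_⟩
    · apply small_unauth hhom; rw [Finset.card_erase_of_mem hk]; omega
    · rwa [Finset.insert_erase hk]
  -- minimal sets meet T in 0 or 2 elements
  have htwo : ∀ M, IsMinimal Γ M → ∀ k ∈ M, k ∈ T → (M ∩ T).card = 2 := by
    intro M hM k hkM hkT
    have hc := hhom M hM
    have hle : (M ∩ T).card ≤ 3 := hc ▸ Finset.card_le_card Finset.inter_subset_left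
    have hpos : 0 < (M ∩ T).card := Finset.card_pos.2 ⟨k, by simp [hkM, hkT]⟩
    have h3 : (M ∩ T).card ≠ 3 := by
      intro h
      have e1 : M ∩ T = M := Finset.eq_of_subset_of_card_le Finset.inter_subset_left (by omega)
      have e2 : M ∩ T = T := Finset.eq_of_subset_of_card_le Finset.inter_subset_right (by omega)
      exact hTu (by rw [← e2, e1]; exact hM.1)
    have h1 : (M ∩ T).card ≠ 1 := by
      intro h
      obtain ⟨a, ha⟩ := Finset.card_eq_one.1 h
      have hka : ∀ i ∈ M, i ∈ T → i = k := by
        intro i h1 h2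
        have e1 : i ∈ M ∩ T := by simp [h1, h2]
        have e2 : k ∈ M ∩ T := by simp [hkM, hkT]
        rw [ha, Finset.mem_singleton] at e1 e2
        rw [e1, e2]
      have hMc : Γ Mᶜ := by
        refine hne k hkT Mᶜ (set1 hka) (by simpa using hkM) ?_
        rw [set2]
        by_contra hx
        exact hM.2 _ (Finset.erase_ssubset hkM) ((hnc _).2 hx)
      exact (hnc M).1 hM.1 hMc
    omega
  have hrest : ∀ M, IsMinimal Γ M → ∀ k ∈ M, k ∈ T → (M \ T).card = 1 := by
    intro M hM k hkM hkT
    have h1 := htwo M hM k hkM hkT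
    have h2 := hhom M hM
    have h3 := Finset.card_inter_add_card_sdiff M T
    omega
  obtain ⟨M0, hM0, hkM0⟩ := hnr k
  obtain ⟨a, ha⟩ := Finset.card_eq_one.1 (hrest M0 hM0 k hkM0 hk)
  have hTc : Γ Tᶜ := by
    by_contra h; exact hTu ((hnc _).2 h)
  obtain ⟨D, hD, hDT⟩ := exists_minimal_sub _ hTc
  have hDT' : ∀ i ∈ D, i ∉ T := fun i hi => by simpa using hDT hi
  have hout : ∀ M, IsMinimal Γ M → (∀ i ∈ M, i ∉ T) → a ∈ M := by
    intro M hM hMT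
    obtain ⟨i, hi, hi'⟩ := auth_meet hmono hnc hM.1 hM0.1
    have : i ∈ M0 \ T := by simp [hi', hMT i hi]
    rw [ha, Finset.mem_singleton] at this
    exact this ▸ hi
  have hno : ∀ d, d ∉ T → d ∉ D → ∀ M, IsMinimal Γ M → d ∈ M → ∀ i ∈ M, i ∉ T := by
    intro d hdT hdD M hM hdM i hiM hiT
    obtain ⟨b, hb⟩ := Finset.card_eq_one.1 (hrest M hM i hiM hiT)
    obtain ⟨e, he, he'⟩ := auth_meet hmono hnc hM.1 hD.1
    have e1 : e ∈ M \ T := by simp [he, hDT' e he']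
    have e2 : d ∈ M \ T := by simp [hdM, hdT]
    rw [hb, Finset.mem_singleton] at e1 e2
    exact hdD (by rw [e2, ← e1]; exact he')
  have hall : ∀ d, d ∉ T → d ∈ D := by
    intro d hdT
    by_contra hdD
    obtain ⟨M, hM, hdM⟩ := hnr d
    obtain ⟨N, hN, hdN, hNM⟩ := crit hmono hnc hM hdM
    have h1 := hout M hM (hno d hdT hdD M hM hdM)
    have h2 := hout N hN (hno d hdT hdD N hN hdN)
    have h3 := hNM a h2 h1
    exact hdD (h3 ▸ hout D hD hDT')
  have hD3 := hhom D hD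
  have hcrit : ∀ b ∈ D, ∃ N, IsMinimal Γ N ∧ b ∈ N ∧ (∀ i ∈ N, i ∈ D → i = b) ∧
      (N ∩ T).card = 2 := by
    intro b hb
    obtain ⟨N, hN, hbN, h⟩ := crit hmono hnc hD hb
    refine ⟨N, hN, hbN, h, ?_⟩
    obtain ⟨i, hi, hib⟩ : ∃ i ∈ N, i ≠ b :=
      Finset.exists_mem_ne (by rw [hhom N hN]; omega) b
    have hiT : i ∈ T := by
      by_contra hx; exact hib (h i hi (hall i hx))
    exact htwo N hN i hi hiT
  obtain ⟨b, hb⟩ : D.Nonempty := Finset.card_pos.1 (by omega)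
  obtain ⟨c, hc, hcb⟩ : ∃ c ∈ D, c ≠ b := Finset.exists_mem_ne (by omega) b
  obtain ⟨N, hN, hbN, hND, hN2⟩ := hcrit b hb
  obtain ⟨N', hN', hcN', hND', -⟩ := hcrit c hc
  have hr1 : (T \ N).card = 1 := by
    have h3 := Finset.card_inter_add_card_sdiff T N
    rw [Finset.inter_comm] at h3; omega
  obtain ⟨r, hr⟩ := Finset.card_eq_one.1 hr1
  have hrr : r ∈ T \ N := by rw [hr]; simp
  have hrT : r ∈ T := (Finset.mem_sdiff.1 hrr).1
  have hrN : r ∉ N := (Finset.mem_sdiff.1 hrr).2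
  have hronly : ∀ i ∈ T, i ∉ N → i = r := by
    intro i h1 h2
    have : i ∈ T \ N := by simp [h1, h2]
    rwa [hr, Finset.mem_singleton] at this
  have hcT := hDT' c hc
  have hbT := hDT' b hb
  have hcN : c ∉ N := fun h => hcb (hND c h hc)
  -- the pair with `c`
  have hpc : Γ (insert c (N.erase b)) := by
    refine hne r hrT _ (set3 c hronly hbT) (set4 b hrT hrN hcT) ?_
    refine hmono N' _ hN'.1 ?_
    intro i hi
    by_cases hiT : i ∈ T
    · by_cases hir : i = r
      · rw [hir]; exact Finset.mem_insert_self _ _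
      · exact Finset.mem_insert_of_mem (set3 c hronly hbT (Finset.mem_erase.2 ⟨hir, hiT⟩))
    · rw [hND' i hi (hall i hiT)]
      exact Finset.mem_insert_of_mem (Finset.mem_insert_self _ _)
  have hn6 : Nᶜ.card = 3 := by
    have h1 : (univ : Finset (Fin n)) = T ∪ D := by
      ext i; have := hall i; simp; tauto
    have h2 : (T ∪ D).card = 6 := by
      rw [Finset.card_union_of_disjoint, hT, hD3]
      exact Finset.disjoint_left.2 fun i h1 h2 => hDT' i h2 h1
    rw [← h1] at h2
    rw [Finset.card_compl, hhom N hN, ← Finset.card_univ, h2]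
  refine hU Nᶜ hn6 (by rw [compl_compl]; exact hhom N hN) ((hnc N).1 hN.1) ?_
  refine ⟨c, by simp [hcN], insert b (Nᶜ.erase c), Finset.subset_insert _ _, ?_, ?_, ?_⟩
  · rw [Finset.mem_insert]
    rintro (e | e)
    · exact hcb e
    · exact Finset.notMem_erase _ _ e
  · rw [set5 hbN hcN]
    exact (hnc _).1 hpc
  · exact hmono D _ hD.1 (set6 c hND)

end Comb

section Final
variable {n : ℕ} {Γ : Finset (Fin n) → Prop} {ψ : (Fin (n + 1) → Fin 2) → ℂ}

lemma zero_notMem_posOf (A : Finset (Fin n)) : (0 : Fin (n + 1)) ∉ posOf A := by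
  simp [posOf, Fin.succ_ne_zero]

lemma succ_mem_posOf (A : Finset (Fin n)) (i : Fin n) : i.succ ∈ posOf A ↔ i ∈ A := by
  simp [posOf]

lemma posOf_insert (A : Finset (Fin n)) (i : Fin n) :
    posOf (insert i A) = insert i.succ (posOf A) := by
  simp [posOf, Finset.image_insert]

lemma posOf_card (A : Finset (Fin n)) : (posOf A).card = A.card :=
  Finset.card_image_of_injective _ (Fin.succ_injective n)

lemma posOf_compl (A : Finset (Fin n)) : (posOf A)ᶜ = insert 0 (posOf Aᶜ) := by
  ext i
  refine Fin.cases ?_ (fun j => ?_) i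
  · simp [zero_notMem_posOf]
  · simp [succ_mem_posOf, Fin.succ_ne_zero]

lemma pr_of_pivot (hψ : IsPureQSSState Γ ψ) (B : Finset (Fin n)) (i : Fin n) (hi : i ∉ B)
    (hB : ¬ Γ B) (hiB : Γ (insert i B)) : Pr ψ (posOf B) i.succ := by
  have h1 := hψ.secrecy B hB
  have h2 := hψ.recover _ hiB
  rw [posOf_insert] at h2
  have hi' : i.succ ∉ posOf B := by rwa [succ_mem_posOf]
  have h3 := Sent_insert ψ hψ.normalized (posOf B) i.succ hi'
  have h4 := Sent_remove ψ hψ.normalized (insert 0 (posOf B)) i.succ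
    (by simp [Fin.succ_ne_zero, hi'])
  rw [Finset.insert_comm] at h4
  exact h3.2 (by linarith [h3.1])

lemma mm_of_ess (hψ : IsPureQSSState Γ ψ) (m : ℕ)
    (hm : ∀ T : Finset (Fin n), T.card = m → MaximallyMixed ψ (posOf T))
    (T : Finset (Fin n)) (hT : T.card = m + 1) (hE : Ess Γ T) : MaximallyMixed ψ (posOf T) := by
  obtain ⟨k, hk, B, hTB, hkB, hB, hkB'⟩ := hE
  have h := pr_of_pivot hψ B k hkB hB hkB'
  have h' := Pr_subset ψ (posOf (T.erase k)) (posOf B) k.succ (by rwa [succ_mem_posOf])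
    (Finset.image_subset_image hTB) h
  have := mm_insert ψ (posOf (T.erase k)) k.succ (by simp [succ_mem_posOf]) h'
    (hm _ (by rw [Finset.card_erase_of_mem hk]; omega))
  rwa [← posOf_insert, Finset.insert_erase hk] at this

lemma Sent_ref (hmono : Monotonic Γ) (hnc : NoCloning Γ) (hψ : IsPureQSSState Γ ψ) :
    Sent ψ {0} = Real.log 2 := by
  have hu : Γ univ := by
    by_contra h
    have := (hnc ∅).not.1 (fun h' => h (hmono _ _ h' (Finset.subset_univ _)))
    simp at this
    exact h this
  have h := hψ.recover _ hu
  have e1 : insert 0 (posOf (univ : Finset (Fin n))) = (∅ : Finset (Fin (n + 1)))ᶜ := by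
    have := posOf_compl (∅ : Finset (Fin n))
    simp only [Finset.compl_empty] at this
    rw [← this]; simp [posOf]
  have e2 : Sent ψ (posOf (univ : Finset (Fin n))) = Sent ψ {0} := by
    have := posOf_compl (univ : Finset (Fin n))
    rw [← Sent_compl, this]; simp [posOf]
  have e3 := Sent_mm ψ ∅ (mm_empty ψ hψ.normalized)
  rw [e1, e2, Sent_compl, e3] at h
  simp at h
  linarith

lemma mm_posOf (hmono : Monotonic Γ) (hnc : NoCloning Γ) (hnr : NoRedundancy Γ)
    (hhom : ∀ A : Finset (Fin n), IsMinimal Γ A → A.card = 3) (hψ : IsPureQSSState Γ ψ)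
    (T : Finset (Fin n)) (hT : T.card ≤ 3) : MaximallyMixed ψ (posOf T) := by
  have m0 : ∀ T : Finset (Fin n), T.card = 0 → MaximallyMixed ψ (posOf T) := by
    intro T h
    rw [Finset.card_eq_zero.1 h]
    exact mm_empty ψ hψ.normalized
  have m1 : ∀ T : Finset (Fin n), T.card = 1 → MaximallyMixed ψ (posOf T) := by
    intro T h
    refine mm_of_ess hψ 0 m0 T h ?_
    obtain ⟨k, rfl⟩ := Finset.card_eq_one.1 h
    exact Ess_single hnr k
  have m2 : ∀ T : Finset (Fin n), T.card = 2 → MaximallyMixed ψ (posOf T) := by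
    intro T h
    refine mm_of_ess hψ 1 m1 T h ?_
    obtain ⟨j, k, hjk, rfl⟩ := Finset.card_eq_two.1 h
    exact Ess_pair hmono hnc hnr j k hjk
  have m3 : ∀ T : Finset (Fin n), T.card = 3 → MaximallyMixed ψ (posOf T) := by
    intro T h
    rcases Ess_triple hmono hnc hnr hhom T h with hE | ⟨U, hU, hUc, hUΓ, hE⟩
    · exact mm_of_ess hψ 2 m2 T h hE
    · exfalso
      have h1 := Sent_mm ψ _ (mm_of_ess hψ 2 m2 U hU hE)
      have hG : Γ Uᶜ := by
        by_contra hx; exact hUΓ ((hnc U).2 hx)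
      have h2 := hψ.recover _ hG
      rw [← posOf_compl, Sent_compl, h1, Sent_ref hmono hnc hψ] at h2
      have h3 := Sent_le ψ hψ.normalized (posOf Uᶜ)
      rw [posOf_card, hUc] at h3
      rw [posOf_card, hU] at h2
      have := Real.log_pos (by norm_num : (1 : ℝ) < 2)
      push_cast at h2 h3
      linarith
  have hc : T.card = 0 ∨ T.card = 1 ∨ T.card = 2 ∨ T.card = 3 := by omega
  rcases hc with h | h | h | h
  · exact m0 T h
  · exact m1 T h
  · exact m2 T h
  · exact m3 T h

lemma exists_posOf (A : Finset (Fin (n + 1))) (h : (0 : Fin (n + 1)) ∉ A) :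
    ∃ T : Finset (Fin n), A = posOf T := by
  refine ⟨univ.filter fun i => i.succ ∈ A, ?_⟩
  ext i
  refine Fin.cases ?_ (fun j => ?_) i
  · simp [zero_notMem_posOf, h]
  · simp [succ_mem_posOf]

end Final

theorem stmt8 (n : ℕ) (hn : 5 ≤ n) (Γ : Finset (Fin n) → Prop)
    (hmono : Monotonic Γ) (hnc : NoCloning Γ) (hnr : NoRedundancy Γ)
    (hhom : ∀ A : Finset (Fin n), IsMinimal Γ A → A.card = 3)
    (ψ : (Fin (n + 1) → Fin 2) → ℂ) (hψ : IsPureQSSState Γ ψ) :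
    ∀ A : Finset (Fin (n + 1)), A.card ≤ 3 → MaximallyMixed ψ A := by
  intro A hA
  by_cases h0 : (0 : Fin (n + 1)) ∈ A
  · obtain ⟨T, hT⟩ := exists_posOf (A.erase 0) (Finset.notMem_erase _ _)
    have hc : T.card ≤ 2 := by
      rw [← posOf_card, ← hT, Finset.card_erase_of_mem h0]; omega
    rw [← Finset.insert_erase h0, hT]
    have hs := hψ.secrecy T (small_unauth hhom T hc)
    rw [Sent_ref hmono hnc hψ] at hs
    refine mm_insert ψ (posOf T) 0 (zero_notMem_posOf T) ?_
      (mm_posOf hmono hnc hnr hhom hψ T (by omega))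
    exact (Sent_insert ψ hψ.normalized (posOf T) 0 (zero_notMem_posOf T)).2 (by linarith)
  · obtain ⟨T, hT⟩ := exists_posOf A h0
    subst hT
    exact mm_posOf hmono hnc hnr hhom hψ T (by rwa [posOf_card] at hA)
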